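/- Let (R_i)_{i∈I} be a rectangular tiling of a rectangle F with |I| ≥ 2 in which every maximal internal line segment is equal to a side of at least one rectangle R_i. Suppose t ∈ I is such that the union of the remaining rectangles (R_i)_{i∈I∖{t}} is itself an axis-parallel rectangle (equivalently, R_t spans a full side of F). Then (R_i)_{i∈I∖{t}} is a rectangular tiling in which every maximal internal line segment is equal to a side of at least one rectangle R_i with i ≠ t. -/

import Mathlib

/-!
Let `U` be the union of the tiles other than `R_t`; a tile is the closure of its interior, so `R_t`
misses the interior of `U`. The point is that a maximal internal segment `S` of the smaller tiling
is already maximal in the large one. Indeed, let `S'` be an internal segment of the large tiling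
containing `S`. Its relative interior lies in the interior of the large rectangle and on boundaries
of tiles, hence outside the interior of `R_t`, hence in `U`. Since `S'` also meets the interior of
the convex set `U`, its relative interior lies in the interior of `U`, away from `R_t`. So `S'` is
internal in the smaller tiling and equals `S`. Now `S` is a side of some tile by hypothesis, and
this tile is not `R_t` because `S` meets the interior of `U`.
-/

open Set

/-- An axis-parallel rectangle `[x1,x2] × [y1,y2]` with `x1 < x2` and `y1 < y2`. -/
structure Rect where
  x1 : ℝ
  x2 : ℝ
  y1 : ℝ
  y2 : ℝ
  hx : x1 < x2
  hy : y1 < y2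

namespace Rect

/-- The rectangle as a subset of the plane. -/
def toSet (R : Rect) : Set (ℝ × ℝ) := Set.Icc R.x1 R.x2 ×ˢ Set.Icc R.y1 R.y2

/-- The area of the rectangle. -/
noncomputable def area (R : Rect) : ℝ := (R.x2 - R.x1) * (R.y2 - R.y1)

end Rect

/-- Vertical closed segment `{x} × [c,d]`. -/
def vseg (x c d : ℝ) : Set (ℝ × ℝ) := ({x} : Set ℝ) ×ˢ Set.Icc c d

/-- Horizontal closed segment `[a,b] × {y}`. -/
def hseg (a b y : ℝ) : Set (ℝ × ℝ) := Set.Icc a b ×ˢ ({y} : Set ℝ)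

/-- Relative interior of a vertical segment. -/
def vsegOpen (x c d : ℝ) : Set (ℝ × ℝ) := ({x} : Set ℝ) ×ˢ Set.Ioo c d

/-- Relative interior of a horizontal segment. -/
def hsegOpen (a b y : ℝ) : Set (ℝ × ℝ) := Set.Ioo a b ×ˢ ({y} : Set ℝ)

/-- `S` is one of the four sides of the rectangle `R`. -/
def Rect.IsSide (R : Rect) (S : Set (ℝ × ℝ)) : Prop :=
  S = vseg R.x1 R.y1 R.y2 ∨ S = vseg R.x2 R.y1 R.y2 ∨
  S = hseg R.x1 R.x2 R.y1 ∨ S = hseg R.x1 R.x2 R.y2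

/-- A rectangular tiling: a finite family of axis-parallel rectangles with pairwise
disjoint interiors whose union is an axis-parallel rectangle `F`. -/
structure Tiling (I : Type*) [Fintype I] where
  R : I → Rect
  F : Rect
  disj : Pairwise fun i j => interior ((R i).toSet) ∩ interior ((R j).toSet) = ∅
  union : (⋃ i, (R i).toSet) = F.toSet

variable {I : Type*} [Fintype I]

/-- An internal line segment of a tiling: a horizontal or vertical closed segment of
positive length contained in the union of the boundaries of the rectangles, whose
relative interior lies in the topological interior of the bounding rectangle. -/
def IsInternalSeg (T : Tiling I) (S : Set (ℝ × ℝ)) : Prop :=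
  (∃ x c d : ℝ, c < d ∧ S = vseg x c d ∧
      S ⊆ (⋃ i, frontier ((T.R i).toSet)) ∧ vsegOpen x c d ⊆ interior T.F.toSet) ∨
  (∃ a b y : ℝ, a < b ∧ S = hseg a b y ∧
      S ⊆ (⋃ i, frontier ((T.R i).toSet)) ∧ hsegOpen a b y ⊆ interior T.F.toSet)

/-- A maximal internal line segment: an internal segment not properly contained in
any other internal segment. -/
def IsMaxInternalSeg (T : Tiling I) (S : Set (ℝ × ℝ)) : Prop :=
  IsInternalSeg T S ∧ ∀ S', IsInternalSeg T S' → S ⊆ S' → S' = S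

/-- `A ∩ B` is a vertical segment of positive length with `A` lying to the left of `B`. -/
def LeftAdj (A B : Rect) : Prop :=
  A.x2 = B.x1 ∧ ∃ c d : ℝ, c < d ∧ A.toSet ∩ B.toSet = vseg A.x2 c d

/-- `A ∩ B` is a horizontal segment of positive length with `A` lying below `B`. -/
def BelowAdj (A B : Rect) : Prop :=
  A.y2 = B.y1 ∧ ∃ a b : ℝ, a < b ∧ A.toSet ∩ B.toSet = hseg a b A.y2

/-- `A` meets the left side of `F` in a segment of positive length. -/
def MeetsLeftSide (A F : Rect) : Prop :=
  ∃ c d : ℝ, c < d ∧ A.toSet ∩ vseg F.x1 F.y1 F.y2 = vseg F.x1 c d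

/-- `A` meets the right side of `F` in a segment of positive length. -/
def MeetsRightSide (A F : Rect) : Prop :=
  ∃ c d : ℝ, c < d ∧ A.toSet ∩ vseg F.x2 F.y1 F.y2 = vseg F.x2 c d

/-- `A` meets the bottom side of `F` in a segment of positive length. -/
def MeetsBottomSide (A F : Rect) : Prop :=
  ∃ a b : ℝ, a < b ∧ A.toSet ∩ hseg F.x1 F.x2 F.y1 = hseg a b F.y1

/-- `A` meets the top side of `F` in a segment of positive length. -/
def MeetsTopSide (A F : Rect) : Prop :=
  ∃ a b : ℝ, a < b ∧ A.toSet ∩ hseg F.x1 F.x2 F.y2 = hseg a b F.y2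

/-- Two tilings indexed by the same finite set are weakly equivalent. -/
def WeakEquiv (T T' : Tiling I) : Prop :=
  (∀ i j : I, LeftAdj (T.R i) (T.R j) ↔ LeftAdj (T'.R i) (T'.R j)) ∧
  (∀ i j : I, BelowAdj (T.R i) (T.R j) ↔ BelowAdj (T'.R i) (T'.R j)) ∧
  (∀ i : I, MeetsLeftSide (T.R i) T.F ↔ MeetsLeftSide (T'.R i) T'.F) ∧
  (∀ i : I, MeetsRightSide (T.R i) T.F ↔ MeetsRightSide (T'.R i) T'.F) ∧
  (∀ i : I, MeetsTopSide (T.R i) T.F ↔ MeetsTopSide (T'.R i) T'.F) ∧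
  (∀ i : I, MeetsBottomSide (T.R i) T.F ↔ MeetsBottomSide (T'.R i) T'.F)

/-- A tiling is area-universal if every assignment of positive areas to the rectangles
is realized by a weakly equivalent tiling. -/
def AreaUniversal (T : Tiling I) : Prop :=
  ∀ w : I → ℝ, (∀ i, 0 < w i) → ∃ T' : Tiling I, WeakEquiv T T' ∧ ∀ i, (T'.R i).area = w i

/-- A tiling is generic if no point belongs to four or more of the rectangles. -/
def Generic (T : Tiling I) : Prop :=
  ∀ p : ℝ × ℝ, ∀ s : Finset I, (∀ i ∈ s, p ∈ (T.R i).toSet) → s.card ≤ 3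

/-- A side-attachment sequence: rectangles with pairwise disjoint interiors such that
every partial union `U_j = R_0 ∪ ⋯ ∪ R_j` is an axis-parallel rectangle. -/
def SideAttachSeq {n : ℕ} (R : Fin n → Rect) : Prop :=
  (Pairwise fun i j => interior ((R i).toSet) ∩ interior ((R j).toSet) = ∅) ∧
  ∀ j : Fin n, ∃ U : Rect, (⋃ i ∈ Set.Iic j, (R i).toSet) = U.toSet

theorem interior_union_diff_interior_subset {X : Type*} [TopologicalSpace X] {U : Set X}
    (hU : IsClosed U) (A : Set X) : interior (U ∪ A) \ interior A ⊆ U :=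
  sdiff_subset_comm.1 <| interior_maximal
    (sdiff_subset_iff.2 interior_subset) (isOpen_interior.sdiff hU)

theorem openSegment_subset_interior_of_convex {𝕜 E : Type*} [Field 𝕜] [LinearOrder 𝕜]
    [IsStrictOrderedRing 𝕜] [TopologicalSpace 𝕜] [OrderTopology 𝕜] [AddCommGroup E] [Module 𝕜 E]
    [TopologicalSpace E] [IsTopologicalAddGroup E] [ContinuousSMul 𝕜 E] {U : Set E}
    (hU : Convex 𝕜 U) {p q : E} (hpq : openSegment 𝕜 p q ⊆ U)
    (hint : (segment 𝕜 p q ∩ interior U).Nonempty) : openSegment 𝕜 p q ⊆ interior U := by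
  obtain ⟨r, hr, hrU⟩ := hint
  have hcl : segment 𝕜 p q ⊆ closure U :=
    segment_subset_closure_openSegment.trans (closure_mono hpq)
  have hr_line : r ∈ range (AffineMap.lineMap p q : 𝕜 → E) := by
    rw [segment_eq_image_lineMap] at hr
    exact image_subset_range _ _ hr
  refine (openSegment_subset_union p q hr_line).trans
    (insert_subset hrU (union_subset ?_ ?_))
  · exact hU.openSegment_closure_interior_subset_interior (hcl (left_mem_segment 𝕜 p q)) hrU
  · exact hU.openSegment_interior_closure_subset_interior hrU (hcl (right_mem_segment 𝕜 p q))

theorem Rect.isClosed_toSet (A : Rect) : IsClosed A.toSet :=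
  isClosed_Icc.prod isClosed_Icc

theorem Rect.convex_toSet (A : Rect) : Convex ℝ A.toSet :=
  (convex_Icc _ _).prod (convex_Icc _ _)

theorem Rect.closure_interior_toSet (A : Rect) : closure (interior A.toSet) = A.toSet := by
  rw [toSet, interior_prod_eq, closure_prod_eq, interior_Icc, interior_Icc,
    closure_Ioo A.hx.ne, closure_Ioo A.hy.ne]

theorem Rect.IsSide.subset {A : Rect} {S : Set (ℝ × ℝ)} (h : A.IsSide S) : S ⊆ A.toSet := by
  have hx := A.hx.le
  have hy := A.hy.le
  rcases h with rfl | rfl | rfl | rfl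
  · exact prod_mono (singleton_subset_iff.2 (left_mem_Icc.2 hx)) Subset.rfl
  · exact prod_mono (singleton_subset_iff.2 (right_mem_Icc.2 hx)) Subset.rfl
  · exact prod_mono Subset.rfl (singleton_subset_iff.2 (left_mem_Icc.2 hy))
  · exact prod_mono Subset.rfl (singleton_subset_iff.2 (right_mem_Icc.2 hy))

theorem vseg_eq_segment {x c d : ℝ} (h : c ≤ d) : vseg x c d = segment ℝ (x, c) (x, d) := by
  rw [vseg, singleton_prod, ← segment_eq_Icc h, Prod.image_mk_segment_right]

theorem hseg_eq_segment {a b y : ℝ} (h : a ≤ b) : hseg a b y = segment ℝ (a, y) (b, y) := by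
  rw [hseg, prod_singleton, ← segment_eq_Icc h, Prod.image_mk_segment_left]

theorem vsegOpen_eq_openSegment {x c d : ℝ} (h : c < d) :
    vsegOpen x c d = openSegment ℝ (x, c) (x, d) := by
  rw [vsegOpen, singleton_prod, ← openSegment_eq_Ioo h, Prod.image_mk_openSegment_right]

theorem hsegOpen_eq_openSegment {a b y : ℝ} (h : a < b) :
    hsegOpen a b y = openSegment ℝ (a, y) (b, y) := by
  rw [hsegOpen, prod_singleton, ← openSegment_eq_Ioo h, Prod.image_mk_openSegment_left]

theorem isInternalSeg_iff_exists_segment {T : Tiling I} {S : Set (ℝ × ℝ)} :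
    IsInternalSeg T S ↔ ∃ p q : ℝ × ℝ, p < q ∧ (p.1 = q.1 ∨ p.2 = q.2) ∧ S = segment ℝ p q ∧
      S ⊆ (⋃ i, frontier (T.R i).toSet) ∧ openSegment ℝ p q ⊆ interior T.F.toSet := by
  constructor
  · rintro (⟨x, c, d, hcd, hS, hfr, hint⟩ | ⟨a, b, y, hab, hS, hfr, hint⟩)
    · rw [vseg_eq_segment hcd.le] at hS
      rw [vsegOpen_eq_openSegment hcd] at hint
      exact ⟨(x, c), (x, d), Prod.mk_lt_mk_iff_right.2 hcd, .inl rfl, hS, hfr, hint⟩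
    · rw [hseg_eq_segment hab.le] at hS
      rw [hsegOpen_eq_openSegment hab] at hint
      exact ⟨(a, y), (b, y), Prod.mk_lt_mk_iff_left.2 hab, .inr rfl, hS, hfr, hint⟩
  · rintro ⟨⟨a, c⟩, ⟨b, d⟩, hpq, rfl | rfl, hS, hfr, hint⟩
    · have hcd : c < d := Prod.mk_lt_mk_iff_right.1 hpq
      rw [← vseg_eq_segment hcd.le] at hS
      rw [← vsegOpen_eq_openSegment hcd] at hint
      exact .inl ⟨a, c, d, hcd, hS, hfr, hint⟩
    · have hab : a < b := Prod.mk_lt_mk_iff_left.1 hpq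
      rw [← hseg_eq_segment hab.le] at hS
      rw [← hsegOpen_eq_openSegment hab] at hint
      exact .inr ⟨a, b, c, hab, hS, hfr, hint⟩

theorem IsInternalSeg.inter_interior_nonempty {T : Tiling I} {S : Set (ℝ × ℝ)}
    (h : IsInternalSeg T S) : (S ∩ interior T.F.toSet).Nonempty := by
  obtain ⟨p, q, -, -, rfl, -, hint⟩ := isInternalSeg_iff_exists_segment.1 h
  have hmid : midpoint ℝ p q ∈ openSegment ℝ p q := midpoint_mem_openSegment p q
  exact ⟨_, openSegment_subset_segment ℝ p q hmid, hint hmid⟩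

namespace Tiling

theorem disjoint_interior_toSet (T : Tiling I) {i j : I} (hij : i ≠ j) :
    Disjoint (interior (T.R i).toSet) (T.R j).toSet := by
  rw [← (T.R j).closure_interior_toSet]
  exact (disjoint_iff_inter_eq_empty.2 (T.disj hij)).closure_right isOpen_interior

theorem disjoint_interior_frontier_toSet (T : Tiling I) (i j : I) :
    Disjoint (interior (T.R i).toSet) (frontier (T.R j).toSet) := by
  obtain rfl | hij := eq_or_ne i j
  · exact disjoint_interior_frontier
  · exact (T.disjoint_interior_toSet hij).mono_right (T.R j).isClosed_toSet.frontier_subset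

theorem disjoint_toSet_interior_iUnion (T : Tiling I) {P : I → Prop} {i : I} (hi : ¬ P i) :
    Disjoint (T.R i).toSet (interior (⋃ (j) (_ : P j), (T.R j).toSet)) := by
  have hdisj : Disjoint (interior (T.R i).toSet) (⋃ (j) (_ : P j), (T.R j).toSet) :=
    disjoint_iUnion₂_right.2 fun j hj => T.disjoint_interior_toSet fun hij => hi (hij ▸ hj)
  rw [← (T.R i).closure_interior_toSet]
  exact (hdisj.mono_right interior_subset).closure_left isOpen_interior

theorem interior_inter_iUnion_frontier_subset (T : Tiling I) (t : I) :
    interior T.F.toSet ∩ ⋃ i, frontier (T.R i).toSet ⊆ ⋃ (i) (_ : i ≠ t), (T.R i).toSet := by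
  have hclosed : IsClosed (⋃ (i) (_ : i ≠ t), (T.R i).toSet) :=
    isClosed_iUnion_of_finite fun i => isClosed_iUnion_of_finite fun _ => (T.R i).isClosed_toSet
  have hF : T.F.toSet ⊆ (⋃ (i) (_ : i ≠ t), (T.R i).toSet) ∪ (T.R t).toSet := by
    rw [← T.union]
    refine iUnion_subset fun i => ?_
    obtain rfl | hi := eq_or_ne i t
    · exact subset_union_right
    · exact subset_union_of_subset_left
        (subset_iUnion₂ (s := fun i (_ : i ≠ t) => (T.R i).toSet) i hi) _
  have hdisj : Disjoint (⋃ i, frontier (T.R i).toSet) (interior (T.R t).toSet) :=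
    disjoint_iUnion_left.2 fun i => (T.disjoint_interior_frontier_toSet t i).symm
  rintro z ⟨hzF, hz⟩
  exact interior_union_diff_interior_subset hclosed (T.R t).toSet
    ⟨interior_mono hF hzF, disjoint_left.1 hdisj hz⟩

variable (T : Tiling I) {P : I → Prop} {U : Rect}

/-- The tiling formed by the tiles of `T` whose index satisfies `P`, when their union is a
rectangle `U`. -/
def restrict [Fintype {i // P i}] (hU : ⋃ (i) (_ : P i), (T.R i).toSet = U.toSet) :
    Tiling {i // P i} where
  R i := T.R i
  F := U
  disj _ _ hij := T.disj (Subtype.coe_injective.ne hij)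
  union := by rw [← hU, iUnion_subtype]

theorem isInternalSeg_restrict_iff [Fintype {i // P i}]
    (hU : ⋃ (i) (_ : P i), (T.R i).toSet = U.toSet) {S : Set (ℝ × ℝ)} :
    IsInternalSeg (T.restrict hU) S ↔ ∃ p q : ℝ × ℝ, p < q ∧ (p.1 = q.1 ∨ p.2 = q.2) ∧
      S = segment ℝ p q ∧ S ⊆ (⋃ i, frontier (T.R i).toSet) ∧
      openSegment ℝ p q ⊆ interior U.toSet := by
  rw [isInternalSeg_iff_exists_segment]
  constructor
  · rintro ⟨p, q, hlt, haxis, hS, hfr, hint⟩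
    refine ⟨p, q, hlt, haxis, hS, hfr.trans ?_, hint⟩
    exact iUnion_subset fun i => subset_iUnion (fun i => frontier (T.R i).toSet) i.val
  · rintro ⟨p, q, hlt, haxis, rfl, hfr, hint⟩
    refine ⟨p, q, hlt, haxis, rfl, ?_, hint⟩
    -- Tiles outside `P` can meet the segment at its endpoints, which are recovered by closure.
    rw [← closure_openSegment]
    refine closure_minimal (fun z hz => ?_) (isClosed_iUnion_of_finite fun i => isClosed_frontier)
    obtain ⟨i, hi⟩ := mem_iUnion.1 (hfr (openSegment_subset_segment ℝ p q hz))
    have hPi : P i := by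
      by_contra hPi
      exact disjoint_left.1 (T.disjoint_toSet_interior_iUnion hPi)
        ((T.R i).isClosed_toSet.frontier_subset hi) (hU ▸ hint hz)
    exact mem_iUnion.2 ⟨⟨i, hPi⟩, hi⟩

theorem isInternalSeg_restrict_of_inter_interior_nonempty {t : I}
    [Fintype {i // i ≠ t}] (hU : ⋃ (i) (_ : i ≠ t), (T.R i).toSet = U.toSet)
    {S : Set (ℝ × ℝ)} (hS : IsInternalSeg T S) (hSU : (S ∩ interior U.toSet).Nonempty) :
    IsInternalSeg (T.restrict hU) S := by
  obtain ⟨p, q, hlt, haxis, rfl, hfr, hint⟩ := isInternalSeg_iff_exists_segment.1 hS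
  have hsub : openSegment ℝ p q ⊆ U.toSet :=
    (subset_inter hint ((openSegment_subset_segment ℝ p q).trans hfr)).trans
      (hU ▸ T.interior_inter_iUnion_frontier_subset t)
  exact (T.isInternalSeg_restrict_iff hU).2
    ⟨p, q, hlt, haxis, rfl, hfr, openSegment_subset_interior_of_convex U.convex_toSet hsub hSU⟩

end Tiling

theorem IsInternalSeg.of_restrict {P : I → Prop} [Fintype {i // P i}] {T : Tiling I} {U : Rect}
    {hU : ⋃ (i) (_ : P i), (T.R i).toSet = U.toSet} {S : Set (ℝ × ℝ)}
    (hS : IsInternalSeg (T.restrict hU) S) : IsInternalSeg T S := by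
  obtain ⟨p, q, hlt, haxis, hS, hfr, hint⟩ := (T.isInternalSeg_restrict_iff hU).1 hS
  have hUF : U.toSet ⊆ T.F.toSet := by
    rw [← T.union, ← hU]
    exact iUnion₂_subset fun i _ => subset_iUnion (fun i => (T.R i).toSet) i
  exact isInternalSeg_iff_exists_segment.2
    ⟨p, q, hlt, haxis, hS, hfr, hint.trans (interior_mono hUF)⟩

theorem IsMaxInternalSeg.of_restrict_ne {t : I} [Fintype {i // i ≠ t}] {T : Tiling I} {U : Rect}
    {hU : ⋃ (i) (_ : i ≠ t), (T.R i).toSet = U.toSet} {S : Set (ℝ × ℝ)}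
    (hS : IsMaxInternalSeg (T.restrict hU) S) : IsMaxInternalSeg T S := by
  refine ⟨hS.1.of_restrict, fun S' hS' hSS' => hS.2 S' ?_ hSS'⟩
  exact T.isInternalSeg_restrict_of_inter_interior_nonempty hU hS'
    (hS.1.inter_interior_nonempty.mono (inter_subset_inter_left _ hSS'))

/-- If in a rectangular tiling every maximal internal segment is a side of
some rectangle, and the union of the rectangles other than `R_t` is itself a rectangle,
then the remaining family is a rectangular tiling in which every maximal internal
segment is a side of some remaining rectangle. -/
theorem delete_boundary_rect_preserves_maxSeg_side_property
    {I : Type*} [Fintype I] [DecidableEq I] (T : Tiling I) (hI : 2 ≤ Fintype.card I)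
    (hmax : ∀ S : Set (ℝ × ℝ), IsMaxInternalSeg T S → ∃ i : I, (T.R i).IsSide S)
    (t : I) (U : Rect)
    (hU : (⋃ i ∈ ({t}ᶜ : Set I), (T.R i).toSet) = U.toSet) :
    ∃ T' : Tiling {i : I // i ≠ t},
      (∀ i : {i : I // i ≠ t}, T'.R i = T.R i.val) ∧ T'.F = U ∧
      ∀ S : Set (ℝ × ℝ), IsMaxInternalSeg T' S →
        ∃ i : {i : I // i ≠ t}, (T.R i.val).IsSide S := by
  refine ⟨T.restrict hU, fun _ => rfl, rfl, fun S hS => ?_⟩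
  obtain ⟨i, hi⟩ := hmax S (IsMaxInternalSeg.of_restrict_ne (hU := hU) hS)
  have hit : i ≠ t := by
    by_contra hit
    obtain ⟨z, hzS, hzU⟩ := hS.1.inter_interior_nonempty
    replace hzU : z ∈ interior (⋃ i ∈ ({t}ᶜ : Set I), (T.R i).toSet) := hU ▸ hzU
    exact disjoint_left.1 (T.disjoint_toSet_interior_iUnion (not_not.2 hit)) (hi.subset hzS) hzU
  exact ⟨⟨i, hit⟩, hi⟩
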